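/- arXiv:2003.13896 — 5 statements merged into one kernel-verified Lean document; each statement's English description precedes it below -/
import Mathlib

section
/- Let (X, d) be a metric space, B ≥ 0, and g a monotone function from finite subsets of X to ℝ (g(A) ≤ g(A') whenever A ⊆ A'). For a finite sequence P = (v_0, …, v_k) of pairwise distinct points of X, define its cost C(P) = Σ_{j=0}^{k−1} d(v_j, v_{j+1}) and its vertex set V(P) = {v_0, …, v_k}. Suppose P_1, …, P_N are such sequences with pairwise distinct starting points v_{s_1}, …, v_{s_N} and C(P_i) ≤ B for every i. Then there exist sequences P_1', …, P_N' of pairwise distinct points such that P_i' starts at v_{s_i}, C(P_i') ≤ B, the vertex sets V(P_1'), …, V(P_N') are pairwise disjoint, and g(⋃_i V(P_i')) = g(⋃_i V(P_i)). In particular, the multiple-path orienteering problem on a metric graph admits an optimal solution consisting of pairwise non-overlapping paths. -/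
/-!
Give each visited vertex to a single path that visits it, every start vertex going to the path that
starts there; this is consistent because the start vertices are distinct. Each path then skips the
vertices it does not own: it keeps its start, its cost does not grow by the triangle inequality, and
the paths become disjoint without the team losing a vertex.
-/

section PathCost

variable {X M : Type*} [AddCommMonoid M]

/-- The cost of the path visiting the entries of `l` in order, for a transition cost `d` that need
not be symmetric; empty and one-vertex paths have cost `0`. -/
def pathCost (d : X → X → M) (l : List X) : M :=
  ((l.zip l.tail).map fun p => d p.1 p.2).sum

@[simp]
theorem pathCost_nil (d : X → X → M) : pathCost d [] = 0 := rfl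

@[simp]
theorem pathCost_singleton (d : X → X → M) (a : X) : pathCost d [a] = 0 := rfl

theorem pathCost_cons_cons (d : X → X → M) (a b : X) (l : List X) :
    pathCost d (a :: b :: l) = d a b + pathCost d (b :: l) := by
  simp [pathCost]

variable [PartialOrder M] [IsOrderedAddMonoid M] {d : X → X → M}

theorem pathCost_le_pathCost_cons (hd : ∀ a b, 0 ≤ d a b) (a : X) (l : List X) :
    pathCost d l ≤ pathCost d (a :: l) := by
  cases l with
  | nil => simp
  | cons b l => simpa only [pathCost_cons_cons] using le_add_of_nonneg_left (hd a b)

theorem pathCost_cons_le_pathCost_cons_cons (hd : ∀ a b, 0 ≤ d a b)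
    (hd_triangle : ∀ a b c, d a c ≤ d a b + d b c) (a b : X) (l : List X) :
    pathCost d (a :: l) ≤ pathCost d (a :: b :: l) := by
  cases l with
  | nil => simpa [pathCost_cons_cons] using hd a b
  | cons c l =>
    calc pathCost d (a :: c :: l)
        = d a c + pathCost d (c :: l) := pathCost_cons_cons d a c l
      _ ≤ d a b + d b c + pathCost d (c :: l) := by gcongr; exact hd_triangle a b c
      _ = pathCost d (a :: b :: c :: l) := by simp only [pathCost_cons_cons, add_assoc]

theorem pathCost_cons_le_pathCost_cons_of_sublist (hd : ∀ a b, 0 ≤ d a b)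
    (hd_triangle : ∀ a b c, d a c ≤ d a b + d b c) {l₁ l₂ : List X} (h : l₁.Sublist l₂) (a : X) :
    pathCost d (a :: l₁) ≤ pathCost d (a :: l₂) := by
  induction h generalizing a with
  | slnil => rfl
  | cons b _ ih => exact (ih a).trans (pathCost_cons_le_pathCost_cons_cons hd hd_triangle a b _)
  | cons_cons b _ ih => simpa only [pathCost_cons_cons] using add_le_add_right (ih b) (d a b)

theorem pathCost_le_pathCost_of_sublist (hd : ∀ a b, 0 ≤ d a b)
    (hd_triangle : ∀ a b c, d a c ≤ d a b + d b c) {l₁ l₂ : List X} (h : l₁.Sublist l₂) :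
    pathCost d l₁ ≤ pathCost d l₂ := by
  induction h with
  | slnil => rfl
  | cons a _ ih => exact ih.trans (pathCost_le_pathCost_cons hd a _)
  | cons_cons a h _ => exact pathCost_cons_le_pathCost_cons_of_sublist hd hd_triangle h a

end PathCost

theorem exists_leftInverse_forall_mem {ι X : Type*} [Nonempty ι] {s : ι → Set X} {v : ι → X}
    (hv : Function.Injective v) (hvs : ∀ i, v i ∈ s i) :
    ∃ owner : X → ι, Function.LeftInverse owner v ∧ ∀ i, ∀ x ∈ s i, x ∈ s (owner x) := by
  have exists_index : ∀ x, (∃ i, x ∈ s i) → ∃ i, x ∈ s i := fun _ => id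
  choose! index mem_index using exists_index
  refine ⟨Function.extend v id index, fun i => hv.extend_apply id index i, fun i x hx => ?_⟩
  by_cases hstart : ∃ j, v j = x
  · obtain ⟨j, rfl⟩ := hstart
    rw [hv.extend_apply]
    exact hvs j
  · rw [Function.extend_apply' _ _ _ hstart]
    exact mem_index x ⟨i, hx⟩

theorem head?_filter_eq_some {X : Type*} {p : X → Bool} {l : List X} {a : X}
    (hl : l.head? = some a) (ha : p a) : (l.filter p).head? = some a := by
  obtain ⟨t, rfl⟩ := List.head?_eq_some_iff.mp hl
  rw [List.filter_cons_of_pos ha, List.head?_cons]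

theorem exists_disjoint_sublists {ι X : Type*} {v : ι → X} (hv : Function.Injective v)
    {P : ι → List X} (hstart : ∀ i, (P i).head? = some (v i)) :
    ∃ P' : ι → List X,
      (∀ i, (P' i).Sublist (P i)) ∧
      (∀ i, (P' i).head? = some (v i)) ∧
      (Pairwise fun i j => (P' i).Disjoint (P' j)) ∧
      ∀ x, (∃ i, x ∈ P' i) ↔ ∃ i, x ∈ P i := by
  classical
  cases isEmpty_or_nonempty ι with
  | inl _ => exact ⟨P, fun _ => .refl _, hstart, fun i => isEmptyElim i, fun _ => Iff.rfl⟩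
  | inr _ =>
    obtain ⟨owner, owner_start, mem_owner⟩ := exists_leftInverse_forall_mem
      (s := fun i => {x | x ∈ P i}) hv fun i => List.mem_of_head? (hstart i)
    refine ⟨fun i => (P i).filter (owner · = i), fun i => List.filter_sublist,
      fun i => head?_filter_eq_some (hstart i) (by simp [owner_start i]),
      fun i j hij x hxi hxj => ?_, fun x => ⟨?_, ?_⟩⟩
    · simp only [List.mem_filter, decide_eq_true_eq] at hxi hxj
      exact hij (hxi.2.symm.trans hxj.2)
    · rintro ⟨i, hx⟩
      exact ⟨i, List.mem_of_mem_filter hx⟩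
    · rintro ⟨i, hx⟩
      exact ⟨owner x, List.mem_filter.mpr ⟨mem_owner i x hx, by simp⟩⟩

theorem mop_optimal_solution_no_overlap_general {ι X M : Type*}
    [AddCommMonoid M] [PartialOrder M] [IsOrderedAddMonoid M] {d : X → X → M}
    (hd : ∀ a b, 0 ≤ d a b) (hd_triangle : ∀ a b c, d a c ≤ d a b + d b c)
    {v : ι → X} (hv : Function.Injective v) {P : ι → List X}
    (hstart : ∀ i, (P i).head? = some (v i)) :
    ∃ P' : ι → List X,
      (∀ i, (P' i).Sublist (P i)) ∧
      (∀ i, (P' i).head? = some (v i)) ∧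
      (∀ i, pathCost d (P' i) ≤ pathCost d (P i)) ∧
      (Pairwise fun i j => (P' i).Disjoint (P' j)) ∧
      ∀ x, (∃ i, x ∈ P' i) ↔ ∃ i, x ∈ P i := by
  obtain ⟨P', hsub, hstart', hdisj, hcover⟩ := exists_disjoint_sublists hv hstart
  exact ⟨P', hsub, hstart',
    fun i => pathCost_le_pathCost_of_sublist hd hd_triangle (hsub i), hdisj, hcover⟩

/-- In a metric space, any feasible collection of budgeted paths with
pairwise distinct starting points can be replaced by a feasible collection of pairwise
vertex-disjoint paths with the same starting points and the same team reward. -/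
theorem mop_optimal_solution_no_overlap
    {X : Type*} [MetricSpace X] [DecidableEq X]
    (B : ℝ) (hB : 0 ≤ B)
    (g : Finset X → ℝ)
    (hgmono : ∀ A A' : Finset X, A ⊆ A' → g A ≤ g A')
    (N : ℕ) (vs : Fin N → X) (hvs : Function.Injective vs)
    (P : Fin N → List X)
    (hnodup : ∀ i, (P i).Nodup)
    (hstart : ∀ i, (P i).head? = some (vs i))
    (hcost : ∀ i, (((P i).zip (P i).tail).map (fun p => dist p.1 p.2)).sum ≤ B) :
    ∃ P' : Fin N → List X,
      (∀ i, (P' i).Nodup) ∧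
      (∀ i, (P' i).head? = some (vs i)) ∧
      (∀ i, (((P' i).zip (P' i).tail).map (fun p => dist p.1 p.2)).sum ≤ B) ∧
      (∀ i j, i ≠ j → Disjoint (P' i).toFinset (P' j).toFinset) ∧
      g (Finset.univ.biUnion fun i => (P' i).toFinset) =
        g (Finset.univ.biUnion fun i => (P i).toFinset) := by
  obtain ⟨P', hsub, hstart', hcost', hdisj, hcover⟩ :=
    mop_optimal_solution_no_overlap_general (d := dist) (fun _ _ => dist_nonneg) dist_triangle
      hvs hstart
  exact ⟨P', fun i => (hsub i).nodup (hnodup i), hstart', fun i => (hcost' i).trans (hcost i),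
    fun i j hij => List.disjoint_toFinset_iff_disjoint.mpr (hdisj hij),
    congrArg g (Finset.ext fun x => by simpa using hcover x)⟩
end

section
/- Let V be a finite set and g : 2^V → ℝ normalized, monotone and submodular. Let k_g ∈ [0,1) be a curvature bound for g (g(V) − g(V \ {v}) ≥ (1 − k_g)·g({v}) for all v ∈ V), and let k_f ∈ [0,1) satisfy the disjoint-gain property: g(Y ∪ Z) − g(Z) ≥ (1 − k_f)·g(Y) for all disjoint Y, Z ⊆ V. Let η ≥ 1 and let F_1, …, F_M be families of subsets of V, each closed under taking subsets (if S ∈ F_i and S' ⊆ S then S' ∈ F_i). Set X_0 = ∅, and for i = 1, …, M let P_i ∈ F_i satisfy the η-approximate greedy condition g(X_{i−1} ∪ P_i) − g(X_{i−1}) ≥ (1/η)·(g(X_{i−1} ∪ S) − g(X_{i−1})) for every S ∈ F_i, where X_i = X_{i−1} ∪ P_i. Then for every choice of pairwise disjoint sets Q_1, …, Q_M with Q_i ∈ F_i, g(X_M) ≥ (1/(1−k_g) + η/(1−k_f))^{−1} · g(Q_1 ∪ ⋯ ∪ Q_M). (This is the approximation guarantee of sequential greedy assignment for the multiple-path orienteering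 problem with an η-approximate single-robot orienteering subroutine.) -/
/-!
Along the greedy chain `X`, monotonicity and submodularity bound the gain of `Q i` on top of the
final solution by its gain on top of `X i`, hence by `η` times the gain of the `i`-th greedy step.
The greedy gains telescope, so joining all the `Q i` to the final solution adds at most `η` times
its value. This gives the factor `1 + η`, which the factor `1 / (1 - kg) + η / (1 - kf)` dominates.
-/

open Finset

theorem sum_succ_sub_castSucc {G : Type*} [AddCommGroup G] {n : ℕ} (a : Fin (n + 1) → G) :
    ∑ i : Fin n, (a i.succ - a i.castSucc) = a (Fin.last n) - a 0 := by
  rw [sum_sub_distrib, sub_eq_sub_iff_add_eq_add, add_comm, ← Fin.sum_univ_succ,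
    Fin.sum_univ_castSucc, add_comm]

/-- Submodularity of a function on a lattice; on `Finset V` this is the usual notion for set
functions. -/
def IsSubmodular {α G : Type*} [Lattice α] [Add G] [LE G] (f : α → G) : Prop :=
  ∀ a b, f (a ⊔ b) + f (a ⊓ b) ≤ f a + f b

namespace IsSubmodular

section OrderedGroup

variable {α G : Type*} [Lattice α] [AddCommGroup G] [PartialOrder G] [IsOrderedAddMonoid G]
  {f : α → G}

theorem sup_sub_le_sup_sub (hf : IsSubmodular f) (hmono : Monotone f) {x y : α} (hxy : x ≤ y)
    (q : α) : f (y ⊔ q) - f y ≤ f (x ⊔ q) - f x := by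
  rw [sub_le_sub_iff]
  calc f (y ⊔ q) + f x
      ≤ f (y ⊔ (x ⊔ q)) + f (y ⊓ (x ⊔ q)) :=
        add_le_add (hmono (sup_le_sup_left le_sup_right y)) (hmono (le_inf hxy le_sup_left))
    _ ≤ f y + f (x ⊔ q) := hf y (x ⊔ q)
    _ = f (x ⊔ q) + f y := add_comm _ _

theorem sup_finsetSup_sub_le_sum [OrderBot α] (hf : IsSubmodular f) (hmono : Monotone f)
    {ι : Type*} (s : Finset ι) {x : ι → α} {y : α} (hxy : ∀ i ∈ s, x i ≤ y) (q : ι → α) :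
    f (y ⊔ s.sup q) - f y ≤ ∑ i ∈ s, (f (x i ⊔ q i) - f (x i)) := by
  induction s using Finset.cons_induction with
  | empty => simp
  | cons i s hi ih =>
    obtain ⟨hxi, hxs⟩ := (forall_mem_cons hi _).mp hxy
    have gain_le := hf.sup_sub_le_sup_sub hmono (hxi.trans le_sup_left : x i ≤ y ⊔ s.sup q) (q i)
    calc f (y ⊔ (cons i s hi).sup q) - f y
        = (f (y ⊔ s.sup q ⊔ q i) - f (y ⊔ s.sup q)) + (f (y ⊔ s.sup q) - f y) := by
          rw [sup_cons, sup_comm (q i), sup_assoc, sub_add_sub_cancel]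
      _ ≤ ∑ j ∈ cons i s hi, (f (x j ⊔ q j) - f (x j)) := by
          rw [sum_cons]
          exact add_le_add gain_le (ih hxs)

end OrderedGroup

theorem sup_finsetSup_sub_le_mul_of_greedy {α R : Type*} [Lattice α] [OrderBot α] [Ring R]
    [PartialOrder R] [IsOrderedAddMonoid R] {f : α → R} (hf : IsSubmodular f) (hmono : Monotone f)
    {η : R} {n : ℕ} {X : Fin (n + 1) → α} (hX : Monotone X) {Q : Fin n → α}
    (hgreedy : ∀ i : Fin n,
      f (X i.castSucc ⊔ Q i) - f (X i.castSucc) ≤ η * (f (X i.succ) - f (X i.castSucc))) :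
    f (X (Fin.last n) ⊔ univ.sup Q) - f (X (Fin.last n)) ≤
      η * (f (X (Fin.last n)) - f (X 0)) := by
  calc f (X (Fin.last n) ⊔ univ.sup Q) - f (X (Fin.last n))
      ≤ ∑ i : Fin n, (f (X i.castSucc ⊔ Q i) - f (X i.castSucc)) :=
        hf.sup_finsetSup_sub_le_sum hmono univ (fun i _ ↦ hX (Fin.le_last i.castSucc)) Q
    _ ≤ ∑ i : Fin n, η * (f (X i.succ) - f (X i.castSucc)) := sum_le_sum fun i _ ↦ hgreedy i
    _ = η * (f (X (Fin.last n)) - f (X 0)) := by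
      rw [← mul_sum]
      exact congrArg (η * ·) (sum_succ_sub_castSucc (f ∘ X))

end IsSubmodular

theorem sga_approximation_guarantee_general {α 𝕜 : Type*} [Lattice α] [OrderBot α] [Field 𝕜]
    [LinearOrder 𝕜] [IsStrictOrderedRing 𝕜] {f : α → 𝕜} (hf0 : f ⊥ = 0) (hmono : Monotone f)
    (hf : IsSubmodular f) {η : 𝕜} (hη : 0 < η) {n : ℕ} {X : Fin (n + 1) → α} {P Q : Fin n → α}
    (hX0 : X 0 = ⊥) (hXstep : ∀ i : Fin n, X i.succ = X i.castSucc ⊔ P i)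
    (hgreedy : ∀ i : Fin n, (1 / η) * (f (X i.castSucc ⊔ Q i) - f (X i.castSucc)) ≤
      f (X i.castSucc ⊔ P i) - f (X i.castSucc)) :
    (1 / (1 + η)) * f (univ.sup Q) ≤ f (X (Fin.last n)) := by
  have hX : Monotone X := Fin.monotone_iff_le_succ.mpr fun i ↦ hXstep i ▸ le_sup_left
  have gain_le (i : Fin n) :
      f (X i.castSucc ⊔ Q i) - f (X i.castSucc) ≤ η * (f (X i.succ) - f (X i.castSucc)) := by
    rw [hXstep, ← inv_mul_le_iff₀ hη, ← one_div]
    exact hgreedy i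
  have total_gain_le := hf.sup_finsetSup_sub_le_mul_of_greedy hmono hX gain_le
  rw [hX0, hf0, sub_zero] at total_gain_le
  rw [one_div, inv_mul_le_iff₀ (by positivity)]
  calc f (univ.sup Q)
      ≤ f (X (Fin.last n) ⊔ univ.sup Q) := hmono le_sup_right
    _ ≤ (1 + η) * f (X (Fin.last n)) := by linarith

/-- Approximation guarantee of sequential greedy assignment with an
`η`-approximate single-robot orienteering subroutine. -/
theorem sga_approximation_guarantee
    {V : Type*} [Fintype V] [DecidableEq V]
    (g : Finset V → ℝ)
    (hg0 : g ∅ = 0)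
    (hgmono : ∀ A B : Finset V, A ⊆ B → g A ≤ g B)
    (hgsub : ∀ A B : Finset V, g A + g B ≥ g (A ∪ B) + g (A ∩ B))
    (kg kf : ℝ) (hkg0 : 0 ≤ kg) (hkg1 : kg < 1) (hkf0 : 0 ≤ kf) (hkf1 : kf < 1)
    (hcurv : ∀ v : V, g Finset.univ - g (Finset.univ \ {v}) ≥ (1 - kg) * g {v})
    (hdisjgain : ∀ Y Z : Finset V, Disjoint Y Z → g (Y ∪ Z) - g Z ≥ (1 - kf) * g Y)
    (η : ℝ) (hη : 1 ≤ η)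
    (M : ℕ) (F : Fin M → Set (Finset V))
    (hFdown : ∀ i : Fin M, ∀ S ∈ F i, ∀ S' : Finset V, S' ⊆ S → S' ∈ F i)
    (P : Fin M → Finset V) (hP : ∀ i, P i ∈ F i)
    (Xs : ℕ → Finset V) (hX0 : Xs 0 = ∅)
    (hXstep : ∀ i : Fin M, Xs ((i : ℕ) + 1) = Xs i ∪ P i)
    (hgreedy : ∀ i : Fin M, ∀ S ∈ F i,
      g (Xs i ∪ P i) - g (Xs i) ≥ (1 / η) * (g (Xs i ∪ S) - g (Xs i)))
    (Q : Fin M → Finset V) (hQ : ∀ i, Q i ∈ F i)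
    (hQdisj : ∀ i j : Fin M, i ≠ j → Disjoint (Q i) (Q j)) :
    g (Xs M) ≥ (1 / (1 / (1 - kg) + η / (1 - kf))) * g (Finset.univ.biUnion Q) := by
  have factor_le : 1 + η ≤ 1 / (1 - kg) + η / (1 - kf) :=
    add_le_add (one_le_one_div (by linarith) (by linarith))
      (le_div_self (by linarith) (by linarith) (by linarith))
  have value_nonneg : 0 ≤ g (univ.biUnion Q) := hg0 ▸ hgmono _ _ (empty_subset _)
  calc (1 / (1 / (1 - kg) + η / (1 - kf))) * g (univ.biUnion Q)
      ≤ (1 / (1 + η)) * g (univ.biUnion Q) := by gcongr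
    _ ≤ g (Xs M) := by
      rw [← sup_eq_biUnion]
      exact sga_approximation_guarantee_general (X := fun i ↦ Xs i) hg0 hgmono hgsub
        (by linarith) hX0 hXstep fun i ↦ hgreedy i (Q i) (hQ i)
end

section
/- Let P be a finite set and F : 2^P → ℝ normalized, monotone and submodular. Let S_1, S_2 ⊆ P be disjoint with |S_1| = α ≥ 1 and |S_1 ∪ S_2| = N > α, and suppose F({a}) ≥ F({b}) for every a ∈ S_1 and b ∈ S_2. Then for every A ⊆ S_1 ∪ S_2 with |A| ≤ α, F((S_1 ∪ S_2) \ A) ≥ F(S_2)/(N − α). -/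
/-!
After removing `A`, every `b ∈ S2` is matched by a remaining path of at least the same individual
reward: `b` itself if it survives, and otherwise some path of `S1`, which cannot lie entirely in `A`
since `A` also contains `b ∉ S1` and is no larger than `S1`. Hence the remaining reward bounds
`F {b}` for every `b ∈ S2`, and subadditivity of `F` sums these bounds to
`F S2 ≤ #S2 • F ((S1 ∪ S2) \ A)`, where `#S2 = N - α`.
-/

open Finset

section OrderedMonoid

variable {M : Type*} [AddCommMonoid M] [Preorder M] [IsOrderedAddMonoid M]

theorem apply_sup_le_add_of_submodular {L : Type*} [Lattice L] {F : L → M}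
    (hnonneg : ∀ a, 0 ≤ F a) (hsub : ∀ a b, F (a ⊔ b) + F (a ⊓ b) ≤ F a + F b) (a b : L) :
    F (a ⊔ b) ≤ F a + F b :=
  (le_add_of_nonneg_right (hnonneg (a ⊓ b))).trans (hsub a b)

variable {P : Type*} [DecidableEq P] {F : Finset P → M}

theorem apply_le_card_nsmul_of_subadditive (h0 : F ∅ = 0)
    (hsub : ∀ A B, F (A ∪ B) ≤ F A + F B) {B : Finset P} {c : M} (hc : ∀ b ∈ B, F {b} ≤ c) :
    F B ≤ #B • c :=
  calc
    F B = F (B.sup singleton) := by rw [sup_singleton_eq_self]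
    _ ≤ ∑ b ∈ B, F {b} := apply_sup_le_sum h0 (hsub _ _) B
    _ ≤ #B • c := sum_le_card_nsmul B _ c hc

end OrderedMonoid

section Removal

variable {P : Type*} [DecidableEq P] {S1 S2 A : Finset P}

theorem exists_mem_union_sdiff_le {β : Type*} [Preorder β] {f : P → β} (hdisj : Disjoint S1 S2)
    (hord : ∀ a ∈ S1, ∀ b ∈ S2, f b ≤ f a) (hA : #A ≤ #S1) {b : P} (hb : b ∈ S2) :
    ∃ c ∈ (S1 ∪ S2) \ A, f b ≤ f c := by
  by_cases hbA : b ∈ A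
  · have hS1 : ¬ S1 ⊆ A := fun hsub ↦
      disjoint_right.mp hdisj hb (eq_of_subset_of_card_le hsub hA ▸ hbA)
    obtain ⟨a, ha, haA⟩ := not_subset.mp hS1
    exact ⟨a, mem_sdiff.mpr ⟨mem_union_left _ ha, haA⟩, hord a ha b hb⟩
  · exact ⟨b, mem_sdiff.mpr ⟨mem_union_right _ hb, hbA⟩, le_rfl⟩

theorem apply_le_card_nsmul_apply_union_sdiff {M : Type*} [AddCommMonoid M] [Preorder M]
    [IsOrderedAddMonoid M] {F : Finset P → M} (h0 : F ∅ = 0) (hmono : Monotone F)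
    (hsub : ∀ A B, F (A ∪ B) ≤ F A + F B) (hdisj : Disjoint S1 S2)
    (hord : ∀ a ∈ S1, ∀ b ∈ S2, F {b} ≤ F {a}) (hA : #A ≤ #S1) :
    F S2 ≤ #S2 • F ((S1 ∪ S2) \ A) := by
  refine apply_le_card_nsmul_of_subadditive h0 hsub fun b hb ↦ ?_
  obtain ⟨c, hc, hbc⟩ := exists_mem_union_sdiff_le hdisj hord hA hb
  exact hbc.trans (hmono (singleton_subset_iff.mpr hc))

end Removal

theorem remaining_reward_N_minus_alpha_bound_general {P R : Type*} [DecidableEq P]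
    [Field R] [LinearOrder R] [IsStrictOrderedRing R] {F : Finset P → R}
    (hF0 : F ∅ = 0) (hFmono : Monotone F) (hFsub : ∀ A B, F (A ∪ B) ≤ F A + F B)
    {α N : ℕ} (hαN : α < N) {S1 S2 A : Finset P} (hdisj : Disjoint S1 S2)
    (hS1card : #S1 = α) (hNcard : #(S1 ∪ S2) = N)
    (hord : ∀ a ∈ S1, ∀ b ∈ S2, F {b} ≤ F {a}) (hA : #A ≤ α) :
    F S2 / ((N : R) - (α : R)) ≤ F ((S1 ∪ S2) \ A) := by
  have hN : N = α + #S2 := by rw [← hNcard, card_union_of_disjoint hdisj, hS1card]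
  have hS2card : (N : R) - α = #S2 := by rw [hN, Nat.cast_add, add_sub_cancel_left]
  have hpos : (0 : R) < N - α := sub_pos.mpr (Nat.cast_lt.mpr hαN)
  rw [div_le_iff₀' hpos, hS2card, ← nsmul_eq_mul]
  exact apply_le_card_nsmul_apply_union_sdiff hF0 hFmono hFsub hdisj hord (hA.trans_eq hS1card.symm)

/-- After any removal of at most `α` paths, the remaining reward is at
least `F(S_2) / (N - α)`. -/
theorem remaining_reward_N_minus_alpha_bound
    {P : Type*} [Fintype P] [DecidableEq P]
    (F : Finset P → ℝ)
    (hF0 : F ∅ = 0)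
    (hFmono : ∀ A B : Finset P, A ⊆ B → F A ≤ F B)
    (hFsub : ∀ A B : Finset P, F A + F B ≥ F (A ∪ B) + F (A ∩ B))
    (α N : ℕ) (hα : 1 ≤ α) (hαN : α < N)
    (S1 S2 : Finset P) (hdisj : Disjoint S1 S2)
    (hS1card : S1.card = α) (hNcard : (S1 ∪ S2).card = N)
    (hord : ∀ a ∈ S1, ∀ b ∈ S2, F {a} ≥ F {b}) :
    ∀ A ⊆ S1 ∪ S2, A.card ≤ α →
      F ((S1 ∪ S2) \ A) ≥ F S2 / ((N : ℝ) - (α : ℝ)) := by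
  have hnonneg (B : Finset P) : 0 ≤ F B := hF0 ▸ hFmono ∅ B B.empty_subset
  exact fun A _ hA ↦ remaining_reward_N_minus_alpha_bound_general hF0 hFmono
    (apply_sup_le_add_of_submodular hnonneg hFsub) hαN hdisj hS1card hNcard hord hA
end

section
/- Let P be a finite set and F : 2^P → ℝ normalized, monotone and submodular. Let α ≥ 1, let S_1, S_2 ⊆ P be disjoint, let A ⊆ S_1 ∪ S_2, and write S = S_1 ∪ S_2, S_2* = A ∩ S_2. Suppose S_1 \ A ≠ ∅, |S_2*| ≤ α, and F({a}) ≥ F({b}) for every a ∈ S_1 \ A and b ∈ S_2*. Then F(S_1 \ A) ≥ (1/α) · ( F((S \ A) ∪ S_2*) − F(S \ A) ). -/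
/-! A nonnegative submodular function is subadditive, so adjoining `T` to any set, one element at a
time, raises the value by at most `∑ b ∈ T, F {b}`. Each of these at most `α` terms is bounded by
`F {a}` for a single surviving `a`, hence by the value of the surviving set. -/

section Subadditive

variable {L M : Type*} [AddCommMonoid M] [PartialOrder M] [IsOrderedAddMonoid M] {f : L → M}

theorem map_sup_le_add_of_submodular [Lattice L] (hf₀ : ∀ x, 0 ≤ f x)
    (hf : ∀ x y, f (x ⊔ y) + f (x ⊓ y) ≤ f x + f y) (x y : L) :
    f (x ⊔ y) ≤ f x + f y :=
  (le_add_of_nonneg_right (hf₀ _)).trans (hf x y)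

theorem map_sup_finset_sup_le_add_sum [SemilatticeSup L] [OrderBot L]
    (hf : ∀ x y, f (x ⊔ y) ≤ f x + f y) {ι : Type*} (u : L) (T : Finset ι) (g : ι → L) :
    f (u ⊔ T.sup g) ≤ f u + ∑ i ∈ T, f (g i) := by
  classical
  induction T using Finset.induction_on with
  | empty => simp
  | insert i T hi ih =>
    calc f (u ⊔ (insert i T).sup g)
        = f ((u ⊔ T.sup g) ⊔ g i) := by rw [Finset.sup_insert, sup_comm (g i), sup_assoc]
      _ ≤ f (u ⊔ T.sup g) + f (g i) := hf _ _
      _ ≤ f u + ∑ j ∈ T, f (g j) + f (g i) := by gcongr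
      _ = f u + ∑ j ∈ insert i T, f (g j) := by
        rw [Finset.sum_insert hi, add_assoc, add_comm (f (g i))]

end Subadditive

section SetFunction

variable {P : Type*} [DecidableEq P]

theorem map_union_le_add_card_nsmul {M : Type*} [AddCommMonoid M] [PartialOrder M]
    [IsOrderedAddMonoid M] {F : Finset P → M} (hF : ∀ A B, F (A ∪ B) ≤ F A + F B)
    (U : Finset P) {T : Finset P} {c : M} (hT : ∀ b ∈ T, F {b} ≤ c) :
    F (U ∪ T) ≤ F U + T.card • c :=
  calc F (U ∪ T)
      = F (U ⊔ T.sup singleton) := by rw [Finset.sup_singleton_eq_self, Finset.sup_eq_union]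
    _ ≤ F U + ∑ b ∈ T, F {b} := map_sup_finset_sup_le_add_sum hF U T singleton
    _ ≤ F U + T.card • c := by gcongr; exact Finset.sum_le_card_nsmul T _ c hT

theorem surviving_S1_marginal_bound_general {K : Type*} [Field K] [LinearOrder K]
    [IsStrictOrderedRing K] {F : Finset P → K} (hF₀ : 0 ≤ F ∅) (hF_mono : Monotone F)
    (hF_sub : ∀ A B, F (A ∪ B) + F (A ∩ B) ≤ F A + F B) {α : K} (hα : 0 < α)
    {R T : Finset P} (U : Finset P) (hT : (T.card : K) ≤ α)
    (hRT : ∃ a ∈ R, ∀ b ∈ T, F {b} ≤ F {a}) :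
    1 / α * (F (U ∪ T) - F U) ≤ F R := by
  obtain ⟨a, ha, hTa⟩ := hRT
  have hF_nonneg (X : Finset P) : 0 ≤ F X := hF₀.trans (hF_mono X.empty_subset)
  have hTR (b : P) (hb : b ∈ T) : F {b} ≤ F R :=
    (hTa b hb).trans (hF_mono (Finset.singleton_subset_iff.mpr ha))
  rw [one_div, inv_mul_le_iff₀ hα, sub_le_iff_le_add']
  calc F (U ∪ T) ≤ F U + T.card • F R :=
        map_union_le_add_card_nsmul (map_sup_le_add_of_submodular hF_nonneg hF_sub) U hTR
    _ ≤ F U + α * F R := by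
        rw [nsmul_eq_mul]
        gcongr
        exact hF_nonneg R

end SetFunction

/-- Bound on the remaining reward of `S_1` after an attack `A`, in terms
of the marginal contribution of the removed part `S_2* = A ∩ S_2` of `S_2`. -/
theorem surviving_S1_marginal_bound
    {P : Type*} [Fintype P] [DecidableEq P]
    (F : Finset P → ℝ)
    (hF0 : F ∅ = 0)
    (hFmono : ∀ A B : Finset P, A ⊆ B → F A ≤ F B)
    (hFsub : ∀ A B : Finset P, F A + F B ≥ F (A ∪ B) + F (A ∩ B))
    (α : ℕ) (hα : 1 ≤ α)
    (S1 S2 A : Finset P) (hdisj : Disjoint S1 S2)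
    (hA : A ⊆ S1 ∪ S2)
    (hS1A : (S1 \ A).Nonempty)
    (hcard : (A ∩ S2).card ≤ α)
    (hord : ∀ a ∈ S1 \ A, ∀ b ∈ A ∩ S2, F {a} ≥ F {b}) :
    F (S1 \ A) ≥ (1 / (α : ℝ)) *
      (F (((S1 ∪ S2) \ A) ∪ (A ∩ S2)) - F ((S1 ∪ S2) \ A)) := by
  have hdom : ∃ a ∈ S1 \ A, ∀ b ∈ A ∩ S2, F {b} ≤ F {a} := hS1A.imp fun a ha => ⟨ha, hord a ha⟩
  exact surviving_S1_marginal_bound_general hF0.ge hFmono hFsub (by exact_mod_cast hα) _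
    (by exact_mod_cast hcard) hdom
end

section
/- Let Π be a finite set, let b : Π → I be a map into a finite index set (the blocks of a partition matroid), and let α be a positive integer. Call a set S ⊆ Π independent if |S ∩ b^{−1}(i)| ≤ 1 for every i ∈ I. Let f : 2^Π → ℝ be any set function, let T ⊆ I with |T| ≤ α, and let S_1 ⊆ b^{−1}(T) be independent. Then max{ f(S_2) : S_2 ⊆ Π \ S_1 and S_1 ∪ S_2 is independent } ≥ max_{S independent} min{ f(S \ A) : A ⊆ S, |A| ≤ α }. In words: the best team reward attainable by the robots outside the blocks committed to S_1 is at least the optimal value of the robust (max–min) problem with up to α removals. -/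
/-! Let `S₁` and `S` be independent sets of a matroid, with `S₁` of at most `α` elements. The
exchange property extends `S₁` by a set `S₂ ⊆ S` that omits at most `#S₁ ≤ α` elements of `S`. The
adversary may remove exactly those, so the robust value of `S` is at most `f S₂`. In a partition
matroid, an independent set that meets at most `α` blocks has at most `α` elements. -/

section Matroid

variable {G : Type*} {M : Matroid G}

theorem exists_subset_indep_union_encard_sdiff_le {I J : Set G} (hI : M.Indep I)
    (hJ : M.Indep J) :
    ∃ K ⊆ J, Disjoint K I ∧ M.Indep (I ∪ K) ∧ (J \ K).encard ≤ I.encard := by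
  have hE : I ∪ J ⊆ M.E := Set.union_subset hI.subset_ground hJ.subset_ground
  obtain ⟨B, hB, hIB⟩ := hI.subset_isBasis_of_subset Set.subset_union_left hE
  obtain ⟨B', hB', hJB'⟩ := hJ.subset_isBasis_of_subset Set.subset_union_right hE
  have exchange : (B' \ B).encard = (B \ B').encard :=
    hB'.isBase_restrict.encard_sdiff_comm hB.isBase_restrict
  have hJB : J \ (B \ I) ⊆ B' \ B ∪ I ∩ J := by grind
  have hBI : B \ B' ⊆ I \ J := by grind [hB.subset]
  refine ⟨B \ I, Set.sdiff_subset_iff.2 hB.subset, Set.disjoint_sdiff_left, ?_, ?_⟩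
  · rw [Set.union_sdiff_cancel hIB]
    exact hB.indep
  · calc (J \ (B \ I)).encard
        ≤ (B' \ B ∪ I ∩ J).encard := Set.encard_le_encard hJB
      _ ≤ (B' \ B).encard + (I ∩ J).encard := Set.encard_union_le _ _
      _ = (B \ B').encard + (I ∩ J).encard := by rw [exchange]
      _ ≤ (I \ J).encard + (I ∩ J).encard := by gcongr ?_ + _; exact Set.encard_le_encard hBI
      _ = I.encard := Set.encard_sdiff_add_encard_inter I J

theorem exists_finset_subset_indep_union_card_sdiff_le [DecidableEq G] {I J : Finset G}
    (hI : M.Indep I) (hJ : M.Indep J) :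
    ∃ K ⊆ J, Disjoint K I ∧ M.Indep ↑(I ∪ K) ∧ (J \ K).card ≤ I.card := by
  obtain ⟨K, hKJ, hKI, hIK, hcard⟩ := exists_subset_indep_union_encard_sdiff_le hI hJ
  lift K to Finset G using J.finite_toSet.subset hKJ
  rw [← Finset.coe_sdiff, Set.encard_coe_eq_coe_finsetCard,
    Set.encard_coe_eq_coe_finsetCard] at hcard
  exact ⟨K, mod_cast hKJ, mod_cast hKI, mod_cast hIK, mod_cast hcard⟩

end Matroid

section RobustReward

variable {G L : Type*} [DecidableEq G] [ConditionallyCompleteLattice L]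

/-- The reward of `S` after an adversary has removed a worst-case subset of at most `α` elements:
the objective of the robust max–min problem. -/
noncomputable def robustReward (f : Finset G → L) (α : ℕ) (S : Finset G) : L :=
  sInf {y | ∃ A ⊆ S, A.card ≤ α ∧ y = f (S \ A)}

theorem robustReward_le_of_card_sdiff_le (f : Finset G → L) {α : ℕ} {S K : Finset G}
    (hKS : K ⊆ S) (hcard : (S \ K).card ≤ α) : robustReward f α S ≤ f K := by
  have hfin : {y | ∃ A ⊆ S, A.card ≤ α ∧ y = f (S \ A)}.Finite := by
    refine (S.powerset.finite_toSet.image fun A => f (S \ A)).subset ?_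
    rintro _ ⟨A, hAS, -, rfl⟩
    exact ⟨A, Finset.mem_coe.2 (Finset.mem_powerset.2 hAS), rfl⟩
  have : Nonempty L := ⟨f K⟩
  refine csInf_le hfin.bddBelow ⟨S \ K, Finset.sdiff_subset, hcard, ?_⟩
  rw [Finset.sdiff_sdiff_eq_self hKS]

/-- The rewards of the teams that complete the committed set `S₁` to an independent set of `M`. -/
def completionRewards (M : Matroid G) (f : Finset G → L) (S₁ : Finset G) : Set L :=
  {x | ∃ S₂ : Finset G, Disjoint S₂ S₁ ∧ M.Indep ↑(S₁ ∪ S₂) ∧ x = f S₂}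

theorem bddAbove_completionRewards [Finite G] (M : Matroid G) (f : Finset G → L)
    (S₁ : Finset G) : BddAbove (completionRewards M f S₁) := by
  have : Nonempty L := ⟨f ∅⟩
  refine (Set.finite_range f).bddAbove.mono ?_
  rintro _ ⟨S₂, -, -, rfl⟩
  exact Set.mem_range_self S₂

theorem partition_matroid_maxmin_bound_general {M : Matroid G} {f : Finset G → L} {α : ℕ}
    {S₁ : Finset G} (hS₁ : M.Indep S₁) (hcard : S₁.card ≤ α)
    (hbdd : BddAbove (completionRewards M f S₁)) :
    sSup {x | ∃ S : Finset G, M.Indep S ∧ x = robustReward f α S} ≤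
      sSup (completionRewards M f S₁) := by
  refine csSup_le ⟨_, ∅, by simp, rfl⟩ ?_
  rintro _ ⟨S, hS, rfl⟩
  obtain ⟨S₂, hS₂S, hdisj, hindep, hS₂card⟩ :=
    exists_finset_subset_indep_union_card_sdiff_le hS₁ hS
  calc robustReward f α S
      ≤ f S₂ := robustReward_le_of_card_sdiff_le f hS₂S (hS₂card.trans hcard)
    _ ≤ sSup (completionRewards M f S₁) := le_csSup hbdd ⟨S₂, hdisj, hindep, rfl⟩

end RobustReward

section PartitionMatroid

variable {G I : Type*}

/-- The partition matroid whose blocks are the fibres of `b`. It is encoded as the pullback along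
`b` of the free matroid on the index set of the blocks. -/
def partitionMatroid (b : G → I) : Matroid G :=
  (Matroid.freeOn Set.univ).comap b

theorem partitionMatroid_indep_iff_injOn {b : G → I} {S : Set G} :
    (partitionMatroid b).Indep S ↔ Set.InjOn b S := by
  simp [partitionMatroid]

theorem partitionMatroid_indep_iff_card_filter_le_one [DecidableEq I] {b : G → I}
    {S : Finset G} :
    (partitionMatroid b).Indep S ↔ ∀ i, (S.filter (fun p => b p = i)).card ≤ 1 := by
  rw [partitionMatroid_indep_iff_injOn]
  simp only [Finset.card_le_one, Finset.mem_filter]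
  constructor
  · rintro hinj i p ⟨hp, hpi⟩ q ⟨hq, hqi⟩
    exact hinj hp hq (hpi.trans hqi.symm)
  · intro hfibre p hp q hq hpq
    exact hfibre (b q) p ⟨hp, hpq⟩ q ⟨hq, rfl⟩

theorem card_le_card_of_partitionMatroid_indep {b : G → I} {S : Finset G} {T : Finset I}
    (hS : (partitionMatroid b).Indep S) (hST : ∀ p ∈ S, b p ∈ T) : S.card ≤ T.card :=
  Finset.card_le_card_of_injOn b hST (partitionMatroid_indep_iff_injOn.1 hS)

end PartitionMatroid

/-- In a partition matroid, the best team reward attainable by the robots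
outside the blocks committed to `S_1` is at least the optimal value of the robust
max–min problem with up to `α` removals. -/
theorem partition_matroid_maxmin_bound
    {G I : Type*} [Fintype G] [DecidableEq G] [Fintype I] [DecidableEq I]
    (b : G → I) (α : ℕ) (hα : 0 < α)
    (f : Finset G → ℝ)
    (T : Finset I) (hT : T.card ≤ α)
    (Indep : Finset G → Prop)
    (hIndep : ∀ S : Finset G, Indep S ↔ ∀ i : I, (S.filter (fun p => b p = i)).card ≤ 1)
    (S1 : Finset G) (hS1T : ∀ p ∈ S1, b p ∈ T) (hS1 : Indep S1) :
    sSup {x : ℝ | ∃ S2 : Finset G, Disjoint S2 S1 ∧ Indep (S1 ∪ S2) ∧ x = f S2} ≥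
      sSup {x : ℝ | ∃ S : Finset G, Indep S ∧
        x = sInf {y : ℝ | ∃ A ⊆ S, A.card ≤ α ∧ y = f (S \ A)}} := by
  obtain rfl : Indep = fun S : Finset G => (partitionMatroid b).Indep S :=
    funext fun S => propext ((hIndep S).trans partitionMatroid_indep_iff_card_filter_le_one.symm)
  exact partition_matroid_maxmin_bound_general hS1
    ((card_le_card_of_partitionMatroid_indep hS1 hS1T).trans hT) (bddAbove_completionRewards _ f S1)
end
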